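/- arXiv:1210.3511 — 6 statements merged into one kernel-verified Lean document; each statement's English description precedes it below -/
import Mathlib

section
/- Let p > 1 be a real number and let f : ℝ → ℝ be a Schwartz function (smooth with all derivatives rapidly decreasing) that satisfies the fourth-order similarity ODE -f''''(y) + (1/4)·y·f'(y) + (1/(p-1))·f(y) + |f(y)|^p = 0 for all y ∈ ℝ. Then the integral identity ∫_ℝ |f(y)|^p dy = ((p-5)/(4(p-1)))·∫_ℝ f(y) dy holds. -/
open MeasureTheory

lemma aux_int_mul (g : SchwartzMap ℝ ℝ) : Integrable (fun y : ℝ => y * g y) := by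
  have h := g.integrable_pow_mul volume 1
  refine h.mono' (by fun_prop) ?_
  filter_upwards with y
  simp

lemma aux_int_deriv (g : SchwartzMap ℝ ℝ) :
    ∫ y : ℝ, SchwartzMap.derivCLM ℝ ℝ g y = 0 :=
  integral_eq_zero_of_hasDerivAt_of_integrable (f := g)
    (fun x => g.hasDerivAt x) (SchwartzMap.derivCLM ℝ ℝ g).integrable g.integrable

lemma aux_int_mul_deriv (g : SchwartzMap ℝ ℝ) :
    ∫ y : ℝ, y * SchwartzMap.derivCLM ℝ ℝ g y = - ∫ y : ℝ, g y := by
  have h : ∫ y : ℝ, (g y + y * SchwartzMap.derivCLM ℝ ℝ g y) = 0 := by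
    refine integral_eq_zero_of_hasDerivAt_of_integrable (f := fun y => y * g y)
      (fun x => ?_) (g.integrable.add (aux_int_mul _)) (aux_int_mul g)
    have h1 := (hasDerivAt_id x).mul (g.hasDerivAt x)
    rw [one_mul] at h1
    exact h1
  rw [integral_add g.integrable (aux_int_mul _)] at h
  linarith

/-- If `f` is a Schwartz function solving the fourth-order similarity ODE
`-f'''' + (1/4)·y·f' + (1/(p-1))·f + |f|^p = 0` on ℝ with `p > 1`, then
`∫ |f|^p = ((p-5)/(4(p-1)))·∫ f`. -/
theorem stmt_0 (p : ℝ) (hp : 1 < p) (f : SchwartzMap ℝ ℝ)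
    (hode : ∀ y : ℝ,
      -(iteratedDeriv 4 (⇑f) y) + (1 / 4) * y * deriv (⇑f) y
        + (1 / (p - 1)) * f y + |f y| ^ p = 0) :
    ∫ y : ℝ, |f y| ^ p = ((p - 5) / (4 * (p - 1))) * ∫ y : ℝ, f y := by
  have hD : ∀ g : SchwartzMap ℝ ℝ, ⇑(SchwartzMap.derivCLM ℝ ℝ g) = deriv ⇑g := fun g => rfl
  set D := SchwartzMap.derivCLM ℝ ℝ with hDdef
  have h4 : iteratedDeriv 4 ⇑f = ⇑(D (D (D (D f)))) := by
    simp only [hD, iteratedDeriv_succ, iteratedDeriv_zero]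
  have e : (fun y : ℝ => |f y| ^ p) =
      fun y => D (D (D (D f))) y - (1 / 4) * (y * D f y) - (1 / (p - 1)) * f y := by
    funext y
    have := hode y
    rw [h4, ← hD] at this
    linarith
  have i1 : Integrable (fun y : ℝ => D (D (D (D f))) y) := (D (D (D (D f)))).integrable
  have i2 : Integrable (fun y : ℝ => (1 / 4 : ℝ) * (y * D f y)) := (aux_int_mul _).const_mul _
  have i3 : Integrable (fun y : ℝ => (1 / (p - 1)) * f y) := f.integrable.const_mul _
  have i12 : Integrable (fun y : ℝ => D (D (D (D f))) y - (1 / 4 : ℝ) * (y * D f y)) :=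
    i1.sub i2
  rw [e, integral_sub i12 i3, integral_sub i1 i2, integral_const_mul, integral_const_mul,
    aux_int_deriv, aux_int_mul_deriv]
  have : p - 1 ≠ 0 := by linarith
  field_simp
  ring
end

section
/- Let p = 5 and let f : ℝ → ℝ be a Schwartz function (smooth with all derivatives rapidly decreasing) that satisfies the fourth-order similarity ODE -f''''(y) + (1/4)·y·f'(y) + (1/(p-1))·f(y) + |f(y)|^p = 0 for all y ∈ ℝ. Then f is identically zero. -/
open MeasureTheory

/-- In the critical case `p = 5`, the only Schwartz solution of the
fourth-order similarity ODE `-f'''' + (1/4)·y·f' + (1/(p-1))·f + |f|^p = 0` is `f ≡ 0`. -/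
theorem stmt_1 (p : ℝ) (hp : p = 5) (f : SchwartzMap ℝ ℝ)
    (hode : ∀ y : ℝ,
      -(iteratedDeriv 4 (⇑f) y) + (1 / 4) * y * deriv (⇑f) y
        + (1 / (p - 1)) * f y + |f y| ^ p = 0) :
    ∀ y : ℝ, f y = 0 := by
  subst hp
  obtain ⟨C1, hC1, h1⟩ := f.decay 1 3
  obtain ⟨C2, hC2, h2⟩ := f.decay 2 0
  set G : ℝ → ℝ := fun y => iteratedDeriv 3 (⇑f) y - (1 / 4) * (y * f y) with hG
  have hder : ∀ y, HasDerivAt G (|f y| ^ (5 : ℝ)) y := by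
    intro y
    have h3 : HasDerivAt (iteratedDeriv 3 (⇑f)) (iteratedDeriv 4 (⇑f) y) y := by
      rw [iteratedDeriv_succ (n := 3)]
      exact (((f.smooth 4).differentiable_iteratedDeriv 3 (by norm_num)) y).hasDerivAt
    have h4 : HasDerivAt (⇑f) (deriv (⇑f) y) y := f.differentiableAt.hasDerivAt
    have h5 := h3.sub (((hasDerivAt_id y).mul h4).const_mul (1 / 4 : ℝ))
    refine h5.congr_deriv ?_
    have := hode y
    norm_num at this ⊢
    linarith
  have hmono : Monotone G := monotone_of_hasDerivAt_nonneg hder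
    (fun y => Real.rpow_nonneg (abs_nonneg _) _)
  have hb : ∀ x, |x| * |G x| ≤ C1 + C2 := by
    intro x
    have a := h1 x
    have b := h2 x
    rw [norm_iteratedFDeriv_eq_norm_iteratedDeriv] at a b
    simp only [iteratedDeriv_zero, Real.norm_eq_abs, pow_one] at a b
    have c : |G x| ≤ |iteratedDeriv 3 (⇑f) x| + 1 / 4 * (|x| * |f x|) := by
      refine (abs_sub _ _).trans (le_of_eq ?_)
      rw [abs_mul, abs_mul]; norm_num
    have d := mul_le_mul_of_nonneg_left c (abs_nonneg x)
    have e : 0 ≤ |x| ^ 2 * |f x| := by positivity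
    nlinarith
  have hzero : ∀ a, G a = 0 := by
    intro a
    by_contra hne
    have hpos : 0 < |G a| := abs_pos.mpr hne
    have hK : 0 < (C1 + C2 + 1) / |G a| := by positivity
    have hKe : (C1 + C2 + 1) / |G a| * |G a| = C1 + C2 + 1 := by field_simp
    set K := (C1 + C2 + 1) / |G a|
    have key : ∀ x, K ≤ |x| → |G a| ≤ |G x| → False := by
      intro x hx hg
      have := mul_le_mul hx hg hpos.le (abs_nonneg x)
      linarith [hb x]
    rcases lt_or_gt_of_ne hne with h | h
    · refine key (min a (-K)) ?_ ?_
      · rw [abs_of_nonpos ((min_le_right _ _).trans (by linarith))]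
        linarith [min_le_right a (-K)]
      · have := hmono (min_le_left a (-K))
        rw [abs_of_neg h, abs_of_neg (by linarith)]
        linarith
    · refine key (max a K) ?_ ?_
      · exact (le_max_right _ _).trans (le_abs_self _)
      · have := hmono (le_max_left a K)
        rw [abs_of_pos h, abs_of_pos (by linarith)]
        linarith
  intro y
  have hG0 : G = fun _ => 0 := funext hzero
  have h := hder y
  rw [hG0] at h
  have h0 := h.unique (hasDerivAt_const y (0 : ℝ))
  rw [Real.rpow_eq_zero (abs_nonneg _) (by norm_num)] at h0
  exact abs_eq_zero.mp h0
end

section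
/- Let p > 1 be a real number with p ≠ 5, and let f : ℝ → ℝ be a Schwartz function, not identically zero, that satisfies the fourth-order similarity ODE -f''''(y) + (1/4)·y·f'(y) + (1/(p-1))·f(y) + |f(y)|^p = 0 for all y ∈ ℝ. Then the total mass of f satisfies: ∫_ℝ f(y) dy < 0 if 1 < p < 5, and ∫_ℝ f(y) dy > 0 if p > 5. -/
open MeasureTheory

/-- For a nontrivial Schwartz solution of the fourth-order similarity ODE
with `p > 1`, `p ≠ 5`, the total mass satisfies `∫ f < 0` for `1 < p < 5`
and `∫ f > 0` for `p > 5`. -/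
theorem stmt_2 (p : ℝ) (hp : 1 < p) (hp5 : p ≠ 5) (f : SchwartzMap ℝ ℝ)
    (hf0 : ∃ y : ℝ, f y ≠ 0)
    (hode : ∀ y : ℝ,
      -(iteratedDeriv 4 (⇑f) y) + (1 / 4) * y * deriv (⇑f) y
        + (1 / (p - 1)) * f y + |f y| ^ p = 0) :
    (p < 5 → (∫ y : ℝ, f y) < 0) ∧ (5 < p → 0 < ∫ y : ℝ, f y) := by
  have e : ∀ g : SchwartzMap ℝ ℝ, ⇑(SchwartzMap.derivCLM ℝ ℝ g) = deriv (⇑g) := by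
    intro g
    ext x
    exact SchwartzMap.derivCLM_apply ℝ g x
  have hy : ∀ g : SchwartzMap ℝ ℝ, Integrable (fun y : ℝ => y * g y) := by
    intro g
    refine (g.integrable_pow_mul volume 1).mono
      (continuous_id.mul g.continuous).aestronglyMeasurable (Filter.Eventually.of_forall ?_)
    intro y
    simp
  set D := SchwartzMap.derivCLM ℝ ℝ with hD
  have h4 : iteratedDeriv 4 (⇑f) = ⇑(D (D (D (D f)))) := by
    simp only [iteratedDeriv_succ, iteratedDeriv_zero, e]
  have hd : ∀ (g : SchwartzMap ℝ ℝ) (y : ℝ), HasDerivAt (⇑g) (D g y) y := by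
    intro g y
    rw [e]
    exact g.differentiableAt.hasDerivAt
  have hF : ∀ y : ℝ, HasDerivAt (fun y : ℝ => D (D (D f)) y - (1 / 4) * (y * f y))
      (D (D (D (D f))) y - (1 / 4) * (1 * f y + y * D f y)) y := by
    intro y
    exact (hd _ y).sub (((hasDerivAt_id y).mul (hd f y)).const_mul (1 / 4))
  have iF' : Integrable (fun y : ℝ =>
      D (D (D (D f))) y - (1 / 4) * (1 * f y + y * D f y)) :=
    (D (D (D (D f)))).integrable.sub
      (((f.integrable.const_mul 1).add (hy (D f))).const_mul (1 / 4))
  have iF : Integrable (fun y : ℝ => D (D (D f)) y - (1 / 4) * (y * f y)) :=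
    (D (D (D f))).integrable.sub ((hy f).const_mul (1 / 4))
  have hI := integral_eq_zero_of_hasDerivAt_of_integrable hF iF' iF
  have hG : (fun y : ℝ => |f y| ^ p) = fun y : ℝ =>
      (D (D (D (D f))) y - (1 / 4) * (1 * f y + y * D f y))
        + (1 / 4 - 1 / (p - 1)) * f y := by
    ext y
    have h := hode y
    rw [h4, ← e f] at h
    linarith
  have iG : Integrable (fun y : ℝ => |f y| ^ p) := by
    rw [hG]
    exact iF'.add (f.integrable.const_mul _)
  have hint : ∫ y : ℝ, |f y| ^ p = (1 / 4 - 1 / (p - 1)) * ∫ y : ℝ, f y := by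
    rw [hG, integral_add iF' (f.integrable.const_mul _), hI, integral_const_mul, zero_add]
  have hc : Continuous (fun y : ℝ => |f y| ^ p) :=
    f.continuous.abs.rpow_const (fun _ => Or.inr (by linarith))
  have hpos : 0 < ∫ y : ℝ, |f y| ^ p := by
    obtain ⟨y, h0⟩ := hf0
    exact integral_pos_of_integrable_nonneg_nonzero (x := y) hc iG
      (fun z => Real.rpow_nonneg (abs_nonneg _) _)
      (Real.rpow_pos_of_pos (abs_pos.2 h0) p).ne'
  rw [hint] at hpos
  have hp1 : 0 < p - 1 := by linarith
  have hk : (1 / 4 - 1 / (p - 1)) = (p - 5) / (4 * (p - 1)) := by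
    field_simp
    ring
  rw [hk] at hpos
  constructor
  · intro h
    have : (p - 5) / (4 * (p - 1)) < 0 := div_neg_of_neg_of_pos (by linarith) (by linarith)
    by_contra! hM
    nlinarith
  · intro h
    have : 0 < (p - 5) / (4 * (p - 1)) := div_pos (by linarith) (by linarith)
    exact (mul_pos_iff_of_pos_left this).1 hpos
end

section
/- Let m ≥ 1 be a natural number and let F : ℝ → ℝ be a smooth function satisfying the one-dimensional kernel equation -(-1)^m·F^{(2m)}(y) + (1/(2m))·y·F'(y) + (1/(2m))·F(y) = 0 for all y ∈ ℝ, where F^{(k)} denotes the k-th derivative. Then for every natural number l ≥ 0, the l-th derivative v = F^{(l)} is an eigenfunction of the Hermite-type operator B with eigenvalue -l/(2m); that is, -(-1)^m·v^{(2m)}(y) + (1/(2m))·y·v'(y) + (1/(2m))·v(y) = -(l/(2m))·v(y) for all y ∈ ℝ. -/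
/-- If the smooth function `F` satisfies the 1D kernel equation `B F = 0`,
where `B w = -(-1)^m w^{(2m)} + (1/(2m))·y·w' + (1/(2m))·w`, then for every `l ≥ 0`
the derivative `F^{(l)}` is an eigenfunction of `B` with eigenvalue `-l/(2m)`. -/
theorem stmt_3 (m : ℕ) (hm : 1 ≤ m) (F : ℝ → ℝ) (hF : ContDiff ℝ (⊤ : ℕ∞) F)
    (hker : ∀ y : ℝ,
      -((-1 : ℝ) ^ m * iteratedDeriv (2 * m) F y)
        + (1 / (2 * (m : ℝ))) * y * deriv F y
        + (1 / (2 * (m : ℝ))) * F y = 0) :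
    ∀ l : ℕ, ∀ y : ℝ,
      -((-1 : ℝ) ^ m * iteratedDeriv (2 * m) (iteratedDeriv l F) y)
        + (1 / (2 * (m : ℝ))) * y * deriv (iteratedDeriv l F) y
        + (1 / (2 * (m : ℝ))) * iteratedDeriv l F y
      = -((l : ℝ) / (2 * (m : ℝ))) * iteratedDeriv l F y := by
  have hD : ∀ k y, HasDerivAt (iteratedDeriv k F) (iteratedDeriv (k + 1) F y) y := by
    intro k y
    rw [iteratedDeriv_succ]
    exact ((hF.differentiable_iteratedDeriv k (by exact_mod_cast ENat.coe_lt_top k)) y).hasDerivAt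
  have hI : ∀ l k, iteratedDeriv k (iteratedDeriv l F) = iteratedDeriv (k + l) F := by
    intro l k
    simp only [iteratedDeriv_eq_iterate, Function.iterate_add_apply]
  have key : ∀ l : ℕ, ∀ y : ℝ,
      -((-1 : ℝ) ^ m * iteratedDeriv (2 * m + l) F y)
        + (1 / (2 * (m : ℝ))) * y * iteratedDeriv (l + 1) F y
        + (1 / (2 * (m : ℝ))) * iteratedDeriv l F y
        + ((l : ℝ) / (2 * (m : ℝ))) * iteratedDeriv l F y = 0 := by
    intro l
    induction l with
    | zero =>
      intro y
      have h := hker y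
      simp only [add_zero, zero_add, iteratedDeriv_one, iteratedDeriv_zero, Nat.cast_zero,
        zero_div, zero_mul]
      exact h
    | succ l ih =>
      intro y
      have h1 := (((((hD (2 * m + l) y).const_mul ((-1 : ℝ) ^ m)).neg).add
        (((hasDerivAt_id y).const_mul (1 / (2 * (m : ℝ)))).mul (hD (l + 1) y))).add
        ((hD l y).const_mul (1 / (2 * (m : ℝ))))).add
        ((hD l y).const_mul ((l : ℝ) / (2 * (m : ℝ))))
      have h2 : HasDerivAt (fun _ : ℝ => (0 : ℝ)) 0 y := hasDerivAt_const y 0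
      have h3 := h1.unique (h2.congr_of_eventuallyEq (Filter.Eventually.of_forall ih))
      simp only [id] at h3
      rw [← h3, ← add_assoc]
      push_cast
      ring
  intro l y
  have h := key l y
  rw [hI, ← iteratedDeriv_succ]
  linarith
end

section
/- Let m ≥ 1 and l ≥ 0 be natural numbers and let F : ℝ → ℝ be a smooth function satisfying the one-dimensional kernel equation -(-1)^m·F^{(2m)}(y) + (1/(2m))·y·F'(y) + (1/(2m))·F(y) = 0 for all y ∈ ℝ. Then the function u(x,t) := t^{-(1+l)/(2m)}·F^{(l)}(x·t^{-1/(2m)}) satisfies the linear poly-harmonic heat equation ∂_t u(x,t) = -(-1)^m·∂_x^{2m} u(x,t) for all x ∈ ℝ and all t > 0. -/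
theorem aux_hasDeriv (F : ℝ → ℝ) (hF : ContDiff ℝ (⊤ : ℕ∞) F) (k : ℕ) (y : ℝ) :
    HasDerivAt (iteratedDeriv k F) (iteratedDeriv (k + 1) F y) y := by
  rw [iteratedDeriv_succ]
  exact ((hF.differentiable_iteratedDeriv k (by exact_mod_cast ENat.natCast_lt_top k)) y).hasDerivAt

theorem aux_iter (F : ℝ → ℝ) (k n : ℕ) :
    iteratedDeriv n (iteratedDeriv k F) = iteratedDeriv (n + k) F := by
  simp only [iteratedDeriv_eq_iterate, Function.iterate_add_apply]

theorem aux_ker (n : ℕ) (e c : ℝ) (F : ℝ → ℝ) (hF : ContDiff ℝ (⊤ : ℕ∞) F)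
    (hker : ∀ y : ℝ, -(e * iteratedDeriv n F y) + c * y * deriv F y + c * F y = 0) (l : ℕ) :
    ∀ y : ℝ, -(e * iteratedDeriv (n + l) F y) + c * y * iteratedDeriv (l + 1) F y
      + c * (1 + l) * iteratedDeriv l F y = 0 := by
  induction l with
  | zero => intro y; simpa [iteratedDeriv_one] using hker y
  | succ l ih =>
    intro y
    have h := (((aux_hasDeriv F hF (n + l) y).const_mul e).neg.add
      (((hasDerivAt_id y).const_mul c).mul (aux_hasDeriv F hF (l + 1) y))).add
      ((aux_hasDeriv F hF l y).const_mul (c * (1 + l)))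
    have h0 := h.unique ((hasDerivAt_const y (0 : ℝ)).congr_of_eventuallyEq
      (Filter.Eventually.of_forall fun z => by simpa using ih z))
    simp only [id] at h0
    push_cast
    rw [← add_assoc n l 1]
    linarith

/-- if the smooth function `F` solves the 1D kernel equation
`-(-1)^m·F^{(2m)} + (1/(2m))·y·F' + (1/(2m))·F = 0`, then for every `l ≥ 0` the
linearized pattern `u(x,t) = t^{-(1+l)/(2m)}·F^{(l)}(x·t^{-1/(2m)})` solves the
linear poly-harmonic heat equation `u_t = -(-1)^m·∂_x^{2m} u` for `t > 0`. -/
theorem stmt_16 (m l : ℕ) (hm : 1 ≤ m) (F : ℝ → ℝ) (hF : ContDiff ℝ (⊤ : ℕ∞) F)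
    (hker : ∀ y : ℝ,
      -((-1 : ℝ) ^ m * iteratedDeriv (2 * m) F y)
        + (1 / (2 * (m : ℝ))) * y * deriv F y
        + (1 / (2 * (m : ℝ))) * F y = 0) :
    ∀ x t : ℝ, 0 < t →
      deriv (fun s : ℝ =>
        s ^ (-((1 : ℝ) + l) / (2 * (m : ℝ)))
          * iteratedDeriv l F (x * s ^ (-(1 : ℝ) / (2 * (m : ℝ))))) t
      = -((-1 : ℝ) ^ m * iteratedDeriv (2 * m)
          (fun z : ℝ =>
            t ^ (-((1 : ℝ) + l) / (2 * (m : ℝ)))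
              * iteratedDeriv l F (z * t ^ (-(1 : ℝ) / (2 * (m : ℝ))))) x) := by
  intro x t ht
  have hk := aux_ker (2 * m) ((-1) ^ m) (1 / (2 * (m : ℝ))) F hF hker l
  have hm0 : (m : ℝ) ≠ 0 := by positivity
  set a : ℝ := -((1 : ℝ) + l) / (2 * (m : ℝ)) with ha
  set b : ℝ := -(1 : ℝ) / (2 * (m : ℝ)) with hb
  have hG : ContDiff ℝ ((2 * m : ℕ) : WithTop ℕ∞) (iteratedDeriv l F) := by
    rw [iteratedDeriv_eq_iterate]
    exact contDiff_infty.1 (hF.iterate_deriv l) (2 * m)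
  have hd := (Real.hasDerivAt_rpow_const (p := a) (Or.inl ht.ne')).mul
    ((aux_hasDeriv F hF l (x * t ^ b)).comp t
      ((Real.hasDerivAt_rpow_const (p := b) (Or.inl ht.ne')).const_mul x))
  have hL := hd.deriv
  have hR : iteratedDeriv (2 * m) (fun z : ℝ => t ^ a * iteratedDeriv l F (z * t ^ b)) x
      = t ^ a * ((t ^ b) ^ (2 * m) * iteratedDeriv (2 * m + l) F (x * t ^ b)) := by
    rw [iteratedDeriv_const_mul_field]
    simp only [mul_comm _ (t ^ b)]
    rw [iteratedDeriv_comp_const_mul hG, aux_iter]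
  have hp : (t ^ b) ^ (2 * m) = t⁻¹ := by
    rw [← Real.rpow_natCast, ← Real.rpow_mul ht.le, ← Real.rpow_neg_one]
    congr 1
    rw [hb]; push_cast; field_simp
  rw [hR, hp]
  refine Eq.trans hL ?_
  have h1 := hk (x * t ^ b)
  simp only [Function.comp]
  rw [Real.rpow_sub_one ht.ne', Real.rpow_sub_one ht.ne']
  have ea : a = -(1 / (2 * (m : ℝ)) * (1 + l)) := by rw [ha]; ring
  have eb : b = -(1 / (2 * (m : ℝ))) := by rw [hb]; ring
  generalize t ^ a = A at *
  generalize t ^ b = B at *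
  rw [ea, eb]
  linear_combination (-A * t⁻¹) * h1
end

section
/- Let m ≥ 1 be a natural number, let λ ≠ μ be real numbers, let ψ : ℝ → ℝ be a Schwartz function satisfying -(-1)^m·ψ^{(2m)}(y) + (1/(2m))·y·ψ'(y) + (1/(2m))·ψ(y) = λ·ψ(y) for all y, and let φ : ℝ → ℝ be a polynomial function satisfying -(-1)^m·φ^{(2m)}(y) - (1/(2m))·y·φ'(y) = μ·φ(y) for all y. Then ψ and φ are orthogonal in the dual L²(ℝ) pairing: ∫_ℝ ψ(y)·φ(y) dy = 0. -/
open MeasureTheory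

lemma aux_integrable (f : SchwartzMap ℝ ℝ) (p : Polynomial ℝ) :
    Integrable (fun y : ℝ => f y * p.eval y) := by
  have hp : Function.HasTemperateGrowth (fun y : ℝ => p.eval y) := by
    induction p using Polynomial.induction_on' with
    | add p q hp hq => simp only [Polynomial.eval_add]; exact hp.add hq
    | monomial n a => simp only [Polynomial.eval_monomial]; fun_prop
  have h := (SchwartzMap.smulLeftCLM ℝ (fun y : ℝ => p.eval y) f).integrable (μ := volume)
  refine h.congr (Filter.Eventually.of_forall fun y => ?_)
  simp [SchwartzMap.smulLeftCLM_apply_apply hp, mul_comm]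

lemma aux_ibp (f : SchwartzMap ℝ ℝ) (p : Polynomial ℝ) :
    ∫ y : ℝ, deriv f y * p.eval y = - ∫ y : ℝ, f y * p.derivative.eval y := by
  have h := integral_mul_deriv_eq_deriv_mul_of_integrable
    (u := fun y => f y) (v := fun y => p.eval y)
    (u' := fun y => deriv f y) (v' := fun y => p.derivative.eval y)
    (fun x _ => f.hasDerivAt x) (fun x _ => p.hasDerivAt x)
    (aux_integrable f p.derivative) (aux_integrable (SchwartzMap.derivCLM ℝ ℝ f) p)
    (aux_integrable f p)
  linarith

lemma aux_iter_s17 (n : ℕ) : ∀ (f : SchwartzMap ℝ ℝ) (p : Polynomial ℝ),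
    Integrable (fun y : ℝ => iteratedDeriv n f y * p.eval y) ∧
    ∫ y : ℝ, iteratedDeriv n f y * p.eval y
      = (-1) ^ n * ∫ y : ℝ, f y * (Polynomial.derivative^[n] p).eval y := by
  induction n with
  | zero => intro f p; simpa using aux_integrable f p
  | succ n ih =>
    intro f p
    have h := ih (SchwartzMap.derivCLM ℝ ℝ f) p
    have e : ⇑(SchwartzMap.derivCLM ℝ ℝ f) = deriv f := rfl
    rw [e, ← iteratedDeriv_succ'] at h
    refine ⟨h.1, h.2.trans ?_⟩
    rw [aux_ibp, Function.iterate_succ_apply', pow_succ]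
    ring

lemma aux_poly (n : ℕ) (p : Polynomial ℝ) :
    iteratedDeriv n (fun z : ℝ => p.eval z)
      = fun z => (Polynomial.derivative^[n] p).eval z := by
  induction n with
  | zero => simp
  | succ n ih =>
    rw [iteratedDeriv_succ, ih, Function.iterate_succ_apply']
    ext z
    simp

/-- if the Schwartz function `ψ` is an eigenfunction of
`B w = -(-1)^m w^{(2m)} + (1/(2m))·y·w' + (1/(2m))·w` with eigenvalue `λ`, and the
polynomial `φ` is an eigenfunction of `B* w = -(-1)^m w^{(2m)} - (1/(2m))·y·w'` with
eigenvalue `μ ≠ λ`, then `∫ ψ·φ = 0`. -/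
theorem stmt_17 (m : ℕ) (hm : 1 ≤ m) (lam mu : ℝ) (hne : lam ≠ mu)
    (ψ : SchwartzMap ℝ ℝ)
    (hψ : ∀ y : ℝ,
      -((-1 : ℝ) ^ m * iteratedDeriv (2 * m) (⇑ψ) y)
        + (1 / (2 * (m : ℝ))) * y * deriv (⇑ψ) y
        + (1 / (2 * (m : ℝ))) * ψ y = lam * ψ y)
    (φ : Polynomial ℝ)
    (hφ : ∀ y : ℝ,
      -((-1 : ℝ) ^ m * iteratedDeriv (2 * m) (fun z : ℝ => φ.eval z) y)
        - (1 / (2 * (m : ℝ))) * y * deriv (fun z : ℝ => φ.eval z) y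
      = mu * φ.eval y) :
    ∫ y : ℝ, ψ y * φ.eval y = 0 := by
  obtain ⟨i1, e1⟩ := aux_iter_s17 (2 * m) ψ φ
  have i2 := aux_integrable (SchwartzMap.derivCLM ℝ ℝ ψ) (Polynomial.X * φ)
  have e2 := aux_ibp ψ (Polynomial.X * φ)
  have i3 := aux_integrable ψ φ
  have i4 := aux_integrable ψ (Polynomial.derivative^[2 * m] φ)
  have i5 := aux_integrable ψ (Polynomial.X * φ.derivative)
  simp only [SchwartzMap.derivCLM_apply] at i2
  have e3 : ∫ y : ℝ, ψ y * (Polynomial.X * φ).derivative.eval y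
      = (∫ y : ℝ, ψ y * φ.eval y) + ∫ y : ℝ, ψ y * (Polynomial.X * φ.derivative).eval y := by
    rw [← integral_add i3 i5]
    congr 1
    ext y
    simp [Polynomial.derivative_mul]
    ring
  rw [pow_mul, neg_one_sq, one_pow, one_mul] at e1
  set c : ℝ := 1 / (2 * (m : ℝ)) with hc
  set s : ℝ := (-1 : ℝ) ^ m with hs
  have hA : lam * ∫ y : ℝ, ψ y * φ.eval y
      = -s * (∫ y : ℝ, iteratedDeriv (2 * m) ψ y * φ.eval y)
        + c * (∫ y : ℝ, deriv ψ y * (Polynomial.X * φ).eval y)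
        + c * ∫ y : ℝ, ψ y * φ.eval y := by
    have i6 : Integrable (fun y : ℝ => -s * (iteratedDeriv (2 * m) ψ y * φ.eval y)
        + c * (deriv ψ y * (Polynomial.X * φ).eval y)) :=
      (i1.const_mul _).add (i2.const_mul _)
    simp only [← integral_const_mul]
    rw [← integral_add (i1.const_mul _) (i2.const_mul _),
      ← integral_add i6 (i3.const_mul _)]
    congr 1
    ext y
    simp only [Polynomial.eval_mul, Polynomial.eval_X]
    linear_combination (-φ.eval y) * hψ y
  have hB : mu * ∫ y : ℝ, ψ y * φ.eval y
      = -s * (∫ y : ℝ, ψ y * (Polynomial.derivative^[2 * m] φ).eval y)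
        - c * (∫ y : ℝ, ψ y * (Polynomial.X * φ.derivative).eval y) := by
    simp only [← integral_const_mul]
    rw [← integral_sub (i4.const_mul _) (i5.const_mul _)]
    congr 1
    ext y
    have h := hφ y
    rw [aux_poly, Polynomial.deriv] at h
    simp only [Polynomial.eval_mul, Polynomial.eval_X]
    linear_combination (-ψ y) * h
  have key : (lam - mu) * ∫ y : ℝ, ψ y * φ.eval y = 0 := by
    rw [e1, e2, e3] at hA
    linear_combination hA - hB
  exact (mul_eq_zero.mp key).resolve_left (sub_ne_zero.mpr hne)
end
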